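/- Let F_D be the set of decorated planar forests with decorations in D = {•} ∪ ℕ, and let 𝒦 be the subspace of the free ℝ-vector space on F_D spanned by those forests in which some ℕ-decorated node is not a leaf. Then 𝒦 is an ideal with respect to the concatenation product, the shuffle product, the (Guin–Oudom extended) left grafting, and the Grossman–Larson product: if π ∈ 𝒦 or η ∈ 𝒦, then π·η, π ⧢ η, π ↷ η, and π ⋄ η all lie in 𝒦. -/

import Mathlib

/-! Decorated planar forests over the decoration set `D = {•} ∪ ℕ`, the
concatenation, shuffle, (Guin–Oudom) left grafting and Grossman–Larson products
on the free ℝ-vector space they span, and the statement that the span `𝒦` of the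
forests having a numbered node which is not a leaf is an ideal for all four
products. -/

inductive Dec : Type where
  | bullet : Dec
  | num : ℕ → Dec
  deriving DecidableEq

/-- Decorated planar trees: a decoration together with an ordered list of subtrees. -/
inductive PTree : Type where
  | node : Dec → List PTree → PTree

/-- Decorated planar forests: ordered lists of decorated planar trees. -/
abbrev Forest : Type := List PTree

namespace PTree

/-- Every numbered node of the tree is a leaf. -/
def numLeavesT : PTree → Bool
  | .node (.num _) ts => ts.isEmpty
  | .node .bullet ts => ts.attach.all fun t => numLeavesT t.1
decreasing_by
  have := List.sizeOf_lt_of_mem t.2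
  simp only [PTree.node.sizeOf_spec]
  omega

end PTree

/-- Every numbered node of the forest is a leaf. -/
def allNumLeaves (π : Forest) : Bool := π.all PTree.numLeavesT

noncomputable section

/-- The free ℝ-vector space spanned by decorated planar forests. -/
abbrev VF := Forest →₀ ℝ

/-- The free ℝ-vector space spanned by decorated planar trees. -/
abbrev VT := PTree →₀ ℝ

mutual
/-- Left grafting of the tree `τ` onto a tree:
`τ ↷ B⁺_d(γ₁⋯γₙ) = B⁺_d(τ·γ₁⋯γₙ + ∑ᵢ γ₁⋯(τ ↷ γᵢ)⋯γₙ)`. -/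
def graftTT (τ : PTree) : PTree → VT
  | .node d ts =>
      Finsupp.single (.node d (τ :: ts)) 1 +
        (graftTL τ ts).sum fun ts' c => Finsupp.single (.node d ts') c

/-- Left grafting of the tree `τ` into one of the trees of a forest (a derivation,
this is `τ ↷ (γ₁⋯γₙ) = ∑ᵢ γ₁⋯(τ ↷ γᵢ)⋯γₙ`; in particular `τ ↷ 1 = 0`). -/
def graftTL (τ : PTree) : List PTree → VF
  | [] => 0
  | t :: ts =>
      ((graftTT τ t).sum fun t' c => Finsupp.single (t' :: ts) c) +
        ((graftTL τ ts).sum fun ts' c => Finsupp.single (t :: ts') c)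
end

/-- Guin–Oudom left grafting of a forest onto a forest, with explicit fuel:
`1 ↷ η = η` and `(τ·π) ↷ η = τ ↷ (π ↷ η) − (τ ↷ π) ↷ η`.
(The fuel `π.length` always suffices, since `graftTL` preserves the number of trees.) -/
def graftFuel : ℕ → Forest → Forest → VF
  | _, [], η => Finsupp.single η 1
  | 0, _ :: _, _ => 0
  | n + 1, τ :: π, η =>
      ((graftFuel n π η).sum fun ρ c => c • graftTL τ ρ) -
        ((graftTL τ π).sum fun ρ c => c • graftFuel n ρ η)

/-- Guin–Oudom left grafting of a forest onto a forest. -/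
def graftF (π η : Forest) : VF := graftFuel π.length π η

/-- All splittings of a list into a pair of complementary subsequences
(the deshuffle coproduct). -/
def splits {α : Type*} : List α → List (List α × List α)
  | [] => [([], [])]
  | a :: l => ((splits l).map fun p => (a :: p.1, p.2)) ++ ((splits l).map fun p => (p.1, a :: p.2))

/-- All interleavings of two lists. -/
def shuffleL {α : Type*} : List α → List α → List (List α)
  | [], l => [l]
  | l, [] => [l]
  | a :: u, b :: v =>
      ((shuffleL u (b :: v)).map (a :: ·)) ++ ((shuffleL (a :: u) v).map (b :: ·))
termination_by l₁ l₂ => l₁.length + l₂.length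

/-- Grossman–Larson product of two forests: `π ⋄ η = π₍₁₎ · (π₍₂₎ ↷ η)`. -/
def glF (π η : Forest) : VF :=
  ((splits π).map fun p => (graftF p.2 η).sum fun ρ c => Finsupp.single (p.1 ++ ρ) c).sum

/-- Shuffle product of two forests. -/
def shF (π η : Forest) : VF := ((shuffleL π η).map fun w => Finsupp.single w (1 : ℝ)).sum

/-- Concatenation product of two forests. -/
def concatF (π η : Forest) : VF := Finsupp.single (π ++ η) 1

/-- Bilinear extension to `VF` of a product defined on basis forests. -/
def ext2 (f : Forest → Forest → VF) (x y : VF) : VF :=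
  x.sum fun π a => y.sum fun η b => (a * b) • f π η

/-- The subspace `𝒦` spanned by the forests in which a numbered node is found at a
position which is not a leaf. -/
def KBad : Submodule ℝ VF :=
  Submodule.span ℝ {v | ∃ π : Forest, allNumLeaves π = false ∧ v = Finsupp.single π (1 : ℝ)}

/-! Grafting only adds children to nodes: the grafted trees are inserted whole and every node of the
target keeps its decoration and its children, possibly enlarged. A numbered node with a child, in
either factor, therefore survives in every forest occurring in a grafting of a single tree, and by
induction along `(τ·π) ↷ η = τ ↷ (π ↷ η) − (τ ↷ π) ↷ η` in every forest occurring in a grafting of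
forests. The shuffle product and the deshuffle coproduct merely rearrange the trees of a forest. -/

/-- The trees in which some numbered node is not a leaf. -/
def badTrees : Set PTree := {t | t.numLeavesT = false}

/-- The forests in which some numbered node is not a leaf; these span `KBad`. -/
def badForests : Set Forest := {π | allNumLeaves π = false}

section Bad

variable {d : Dec} {t : PTree} {π η : Forest}

theorem mem_badForests_iff : π ∈ badForests ↔ ∃ t ∈ π, t ∈ badTrees := by
  simp [badForests, badTrees, allNumLeaves]

theorem cons_mem_badForests : t :: π ∈ badForests ↔ t ∈ badTrees ∨ π ∈ badForests := by
  simp [mem_badForests_iff]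

theorem append_mem_badForests : π ++ η ∈ badForests ↔ π ∈ badForests ∨ η ∈ badForests := by
  simp [mem_badForests_iff, or_and_right, exists_or]

theorem mem_badForests_iff_of_perm (h : π.Perm η) : π ∈ badForests ↔ η ∈ badForests := by
  simp [mem_badForests_iff, h.mem_iff]

theorem ne_nil_of_mem_badForests (h : π ∈ badForests) : π ≠ [] := by
  rintro rfl
  simp [mem_badForests_iff] at h

theorem node_mem_badTrees :
    .node d π ∈ badTrees ↔ d ≠ .bullet ∧ π ≠ [] ∨ π ∈ badForests := by
  cases d with
  | bullet => simp [badTrees, badForests, PTree.numLeavesT, allNumLeaves]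
  | num n => simpa [badTrees, PTree.numLeavesT] using ne_nil_of_mem_badForests

end Bad

section KBad

variable {x y : VF}

theorem mem_KBad_iff : x ∈ KBad ↔ ∀ π ∈ x.support, π ∈ badForests := by
  have KBad_eq_supported : KBad = Finsupp.supported ℝ ℝ badForests := by
    rw [Finsupp.supported_eq_span_single, KBad]
    congr 1
    ext v
    exact exists_congr fun π => and_congr_right fun _ => eq_comm
  rw [KBad_eq_supported, Finsupp.mem_supported]
  rfl

theorem single_mem_KBad {π : Forest} (h : π ∈ badForests) (c : ℝ) : Finsupp.single π c ∈ KBad :=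
  mem_KBad_iff.2 fun _ hρ => ((Finsupp.mem_support_single _ _ _).1 hρ).1 ▸ h

theorem ext2_mem_KBad {f : Forest → Forest → VF}
    (hf : ∀ {π η : Forest}, π ∈ badForests ∨ η ∈ badForests → f π η ∈ KBad)
    (h : x ∈ KBad ∨ y ∈ KBad) : ext2 f x y ∈ KBad := by
  refine Submodule.sum_mem _ fun π hπ => Submodule.sum_mem _ fun η hη =>
    Submodule.smul_mem _ _ (hf ?_)
  exact h.imp (fun hx => mem_KBad_iff.1 hx π hπ) fun hy => mem_KBad_iff.1 hy η hη

end KBad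

section Grafting

variable {τ t t' : PTree} {π ρ η : Forest}

theorem mem_support_graftTT_node {d : Dec} (h : t' ∈ (graftTT τ (.node d π)).support) :
    t' = .node d (τ :: π) ∨ ∃ ρ ∈ (graftTL τ π).support, t' = .node d ρ := by
  classical
  rw [graftTT] at h
  rcases Finset.mem_union.1 (Finsupp.support_add h) with h_root | h_sub
  · exact .inl ((Finsupp.mem_support_single _ _ _).1 h_root).1
  · obtain ⟨ρ, hρ, rfl⟩ := Finset.mem_image.1 (Finsupp.mapDomain_support h_sub)
    exact .inr ⟨ρ, hρ, rfl⟩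

theorem mem_support_graftTL_cons (h : ρ ∈ (graftTL τ (t :: π)).support) :
    (∃ t' ∈ (graftTT τ t).support, ρ = t' :: π) ∨
      ∃ π' ∈ (graftTL τ π).support, ρ = t :: π' := by
  classical
  rw [graftTL] at h
  rcases Finset.mem_union.1 (Finsupp.support_add h) with h_head | h_tail
  · obtain ⟨t', ht', rfl⟩ := Finset.mem_image.1 (Finsupp.mapDomain_support h_head)
    exact .inl ⟨t', ht', rfl⟩
  · obtain ⟨π', hπ', rfl⟩ := Finset.mem_image.1 (Finsupp.mapDomain_support h_tail)
    exact .inr ⟨π', hπ', rfl⟩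

theorem ne_nil_of_mem_support_graftTL (h : ρ ∈ (graftTL τ π).support) : ρ ≠ [] := by
  cases π with
  | nil => simp [graftTL] at h
  | cons t π =>
    obtain ⟨t', -, rfl⟩ | ⟨π', -, rfl⟩ := mem_support_graftTL_cons h <;> exact List.cons_ne_nil _ _

mutual

theorem mem_badTrees_of_mem_support_graftTT {t' : PTree} :
    ∀ t : PTree, t' ∈ (graftTT τ t).support → τ ∈ badTrees ∨ t ∈ badTrees → t' ∈ badTrees
  | .node d π, ht', h => by
    rw [node_mem_badTrees] at h
    obtain rfl | ⟨ρ, hρ, rfl⟩ := mem_support_graftTT_node ht'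
    · rw [node_mem_badTrees, cons_mem_badForests]
      have cons_ne_nil : τ :: π ≠ [] := List.cons_ne_nil _ _
      tauto
    · rw [node_mem_badTrees]
      have ne_nil := ne_nil_of_mem_support_graftTL hρ
      have bad_of_bad := mem_badForests_of_mem_support_graftTL π hρ
      tauto

theorem mem_badForests_of_mem_support_graftTL {ρ : Forest} :
    ∀ π : List PTree, ρ ∈ (graftTL τ π).support →
      τ ∈ badTrees ∨ π ∈ badForests → ρ ∈ badForests
  | [], hρ, _ => by simp [graftTL] at hρ
  | t :: π, hρ, h => by
    rw [cons_mem_badForests] at h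
    obtain ⟨t', ht', rfl⟩ | ⟨π', hπ', rfl⟩ := mem_support_graftTL_cons hρ
    · have bad_of_bad := mem_badTrees_of_mem_support_graftTT t ht'
      rw [cons_mem_badForests]
      tauto
    · have bad_of_bad := mem_badForests_of_mem_support_graftTL π hπ'
      rw [cons_mem_badForests]
      tauto

end

theorem graftTL_mem_KBad (h : τ ∈ badTrees ∨ π ∈ badForests) : graftTL τ π ∈ KBad :=
  mem_KBad_iff.2 fun _ hρ => mem_badForests_of_mem_support_graftTL π hρ h

theorem graftFuel_mem_KBad (n : ℕ) (h : π ∈ badForests ∨ η ∈ badForests) :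
    graftFuel n π η ∈ KBad := by
  induction n, π, η using graftFuel.induct with
  | case1 n η =>
    rw [graftFuel]
    exact single_mem_KBad (h.resolve_left fun h_nil => ne_nil_of_mem_badForests h_nil rfl) 1
  | case2 τ π η =>
    rw [graftFuel]
    exact Submodule.zero_mem _
  | case3 n τ π η ih_tail ih_graft =>
    rw [graftFuel]
    rw [cons_mem_badForests, or_assoc] at h
    refine Submodule.sub_mem _ (Submodule.sum_smul_mem _ _ fun ρ hρ => graftTL_mem_KBad ?_)
      (Submodule.sum_smul_mem _ _ fun ρ hρ => ih_graft ρ ?_)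
    · exact h.imp_right fun hπη => mem_KBad_iff.1 (ih_tail hπη) ρ hρ
    · exact (or_assoc.2 h).imp_left (mem_badForests_of_mem_support_graftTL π hρ)

theorem graftF_mem_KBad (h : π ∈ badForests ∨ η ∈ badForests) : graftF π η ∈ KBad :=
  graftFuel_mem_KBad _ h

end Grafting

section Permutations

variable {α : Type*}

theorem perm_append_of_mem_splits {l : List α} {p : List α × List α} (hp : p ∈ splits l) :
    (p.1 ++ p.2).Perm l := by
  induction l generalizing p with
  | nil => simp_all [splits]
  | cons a l ih =>
    simp only [splits, List.mem_append, List.mem_map] at hp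
    obtain ⟨q, hq, rfl⟩ | ⟨q, hq, rfl⟩ := hp
    · exact (ih hq).cons a
    · exact List.perm_middle.trans ((ih hq).cons a)

theorem perm_append_of_mem_shuffleL {u v w : List α} (hw : w ∈ shuffleL u v) :
    w.Perm (u ++ v) := by
  induction u, v using shuffleL.induct generalizing w with
  | case1 v => simp_all [shuffleL]
  | case2 u hu => cases u <;> simp_all [shuffleL]
  | case3 a u b v ih_left ih_right =>
    simp only [shuffleL, List.mem_append, List.mem_map] at hw
    obtain ⟨w, hw, rfl⟩ | ⟨w, hw, rfl⟩ := hw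
    · exact (ih_left hw).cons a
    · exact ((ih_right hw).cons b).trans List.perm_middle.symm

end Permutations

section Products

variable {π η : Forest}

theorem concatF_mem_KBad (h : π ∈ badForests ∨ η ∈ badForests) : concatF π η ∈ KBad :=
  single_mem_KBad (append_mem_badForests.2 h) 1

theorem shF_mem_KBad (h : π ∈ badForests ∨ η ∈ badForests) : shF π η ∈ KBad := by
  refine list_sum_mem fun v hv => ?_
  obtain ⟨w, hw, rfl⟩ := List.mem_map.1 hv
  refine single_mem_KBad ?_ 1
  rwa [mem_badForests_iff_of_perm (perm_append_of_mem_shuffleL hw), append_mem_badForests]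

theorem glF_mem_KBad (h : π ∈ badForests ∨ η ∈ badForests) : glF π η ∈ KBad := by
  refine list_sum_mem fun v hv => ?_
  obtain ⟨⟨π₁, π₂⟩, hp, rfl⟩ := List.mem_map.1 hv
  refine Submodule.sum_mem _ fun ρ hρ => single_mem_KBad (append_mem_badForests.2 ?_) _
  rw [← mem_badForests_iff_of_perm (perm_append_of_mem_splits hp), append_mem_badForests,
    or_assoc] at h
  exact h.imp_right fun hπ₂η => mem_KBad_iff.1 (graftF_mem_KBad hπ₂η) ρ hρ

end Products

/-- `𝒦` is an ideal with respect to the concatenation, shuffle, grafting and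
Grossman–Larson products. -/
theorem stmt11 (x y : VF) (h : x ∈ KBad ∨ y ∈ KBad) :
    ext2 concatF x y ∈ KBad ∧ ext2 shF x y ∈ KBad ∧
      ext2 graftF x y ∈ KBad ∧ ext2 glF x y ∈ KBad :=
  ⟨ext2_mem_KBad concatF_mem_KBad h, ext2_mem_KBad shF_mem_KBad h,
    ext2_mem_KBad graftF_mem_KBad h, ext2_mem_KBad glF_mem_KBad h⟩

end
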